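/- Let Σ = {1,…,σ} and B_k = (1·2···σ)^k. The number of shortest absent subsequences of B_k equals Σ_{t=1}^{σ} binom(σ, t)·binom(k, t−1), i.e., |sas(B_k)| = Σ_{t=1}^{σ} C(σ,t)·C(k,t−1). -/

import Mathlib

/-!
An absent word over `{1,…,σ}` of minimal length is the same as a non-increasing word of length
`k + 1`. Each block of `B_k` can absorb one arbitrary letter, so every word of length at most `k`
embeds (`sublist_Bword_of_length_le`); an ascent lets one block absorb two letters, so a word of
length `k + 1` that is not non-increasing embeds as well (`pairwise_ge_of_not_sublist`); and a block,
being strictly increasing, absorbs at most one letter of a non-increasing word, so a non-increasing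
word of length `k + 1` is absent (`not_sublist_Bword`).

Non-increasing words of length `k + 1` correspond to multisets of size `k + 1` on `σ` letters, of
which there are `C(σ + k, k + 1)` (`ncard_pairwise_ge`). Vandermonde's identity applied to this
binomial coefficient, with `C(k, k + 1 - t) = C(k, t - 1)`, gives the sum (`sum_choose_mul_choose`).
-/


/-- The word `1·2···σ` over the alphabet `Σ = {1,…,σ} ⊆ ℕ`. -/
def ascWord (σ : ℕ) : List ℕ := (List.range σ).map (· + 1)

/-- The word `B_k = (1·2···σ)^k`. -/
def Bword (σ k : ℕ) : List ℕ := (List.replicate k (ascWord σ)).flatten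

/-- `v` is a shortest absent subsequence (SAS) of `w`: `v` is a word over `alph(w)`
which is not a subsequence of `w`, of minimal length with this property. -/
def IsSAS (w v : List ℕ) : Prop :=
  (∀ a ∈ v, a ∈ w) ∧ ¬ v.Sublist w ∧
    ∀ u : List ℕ, (∀ a ∈ u, a ∈ w) → ¬ u.Sublist w → v.length ≤ u.length

theorem mem_ascWord {σ a : ℕ} : a ∈ ascWord σ ↔ 1 ≤ a ∧ a ≤ σ := by
  simp only [ascWord, List.mem_map, List.mem_range]
  constructor
  · rintro ⟨b, hb, rfl⟩
    omega
  · rintro ⟨h1, h2⟩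
    exact ⟨a - 1, by omega, by omega⟩

theorem pairwise_ascWord (σ : ℕ) : (ascWord σ).Pairwise (· < ·) := by
  rw [ascWord, List.pairwise_map]
  exact List.pairwise_lt_range.imp (by intros; omega)

theorem Bword_succ (σ k : ℕ) : Bword σ (k + 1) = ascWord σ ++ Bword σ k := by
  simp [Bword, List.replicate_succ]

theorem mem_Bword {σ k a : ℕ} (hk : 1 ≤ k) : a ∈ Bword σ k ↔ 1 ≤ a ∧ a ≤ σ := by
  have : k ≠ 0 := by omega
  simp [Bword, List.mem_flatten, List.mem_replicate, this, mem_ascWord]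

theorem sublist_Bword_of_length_le {σ : ℕ} :
    ∀ {k : ℕ} {v : List ℕ}, (∀ a ∈ v, 1 ≤ a ∧ a ≤ σ) → v.length ≤ k → v.Sublist (Bword σ k)
  | _, [], _, _ => List.nil_sublist _
  | 0, _ :: _, _, h => by simp at h
  | k + 1, a :: v, hv, h => by
    rw [Bword_succ, ← List.singleton_append]
    refine List.Sublist.append ?_ (sublist_Bword_of_length_le ?_ (by simpa using h))
    · rw [List.singleton_sublist, mem_ascWord]
      exact hv a (by simp)
    · exact fun b hb => hv b (by simp [hb])

theorem pair_sublist_ascWord {σ a b : ℕ} (ha : 1 ≤ a) (hab : a < b) (hb : b ≤ σ) :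
    [a, b].Sublist (ascWord σ) := by
  apply List.sublist_of_subperm_of_pairwise (r := (· < ·)) _ (by simpa using hab)
    (pairwise_ascWord σ)
  apply List.subperm_of_subset (by simp; omega)
  intro x hx
  simp only [List.mem_cons, List.not_mem_nil, or_false] at hx
  rw [mem_ascWord]
  omega

theorem pairwise_ge_of_not_sublist {σ : ℕ} :
    ∀ {k : ℕ} {v : List ℕ}, (∀ a ∈ v, 1 ≤ a ∧ a ≤ σ) → v.length = k + 1 →
      ¬ v.Sublist (Bword σ k) → v.Pairwise (· ≥ ·) := by
  intro k v hv hl hn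
  rw [← List.isChain_iff_pairwise]
  induction v generalizing k with
  | nil => simp
  | cons a v ih =>
    match v, k with
    | [], _ => simp
    | b :: w, 0 => simp at hl
    | b :: w, k + 1 =>
      have ha := hv a (by simp)
      have hb := hv b (by simp)
      simp only [List.length_cons] at hl
      rw [List.isChain_cons_cons]
      constructor
      · by_contra hab
        -- The first block absorbs both letters of the ascent.
        refine hn (Bword_succ σ k ▸ ?_)
        exact (pair_sublist_ascWord ha.1 (by omega) hb.2).append
          (sublist_Bword_of_length_le (fun c hc => hv c (by simp [hc])) (by omega))
      · refine ih (k := k) (fun c hc => hv c (List.mem_cons_of_mem _ hc))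
          (by simp only [List.length_cons]; omega) fun hs => hn ?_
        rw [Bword_succ, ← List.singleton_append]
        exact (List.singleton_sublist.2 (mem_ascWord.2 ha)).append hs

theorem not_sublist_Bword {σ k : ℕ} {v : List ℕ} (hv : v.Pairwise (· ≥ ·))
    (hl : k < v.length) : ¬ v.Sublist (Bword σ k) := by
  induction k generalizing v with
  | zero =>
    intro h
    have := h.length_le
    simp [Bword] at this
    simp [this] at hl
  | succ k ih =>
    rw [Bword_succ, List.sublist_append_iff]
    rintro ⟨l₁, l₂, rfl, h₁, h₂⟩
    rw [List.pairwise_append] at hv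
    have h₁' := (pairwise_ascWord σ).sublist h₁
    -- `l₁` is both strictly increasing and non-increasing.
    have : l₁.length ≤ 1 := by
      match l₁, hv.1, h₁' with
      | [], _, _ => simp
      | [_], _, _ => simp
      | a :: b :: _, h, h' =>
        have := List.rel_of_pairwise_cons h (a' := b) (by simp)
        have := List.rel_of_pairwise_cons h' (a' := b) (by simp)
        omega
    rw [List.length_append] at hl
    exact ih hv.2.1 (by omega) h₂

theorem isSAS_Bword_iff {σ k : ℕ} (hσ : 1 ≤ σ) (hk : 1 ≤ k) (v : List ℕ) :
    IsSAS (Bword σ k) v ↔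
      (∀ a ∈ v, 1 ≤ a ∧ a ≤ σ) ∧ v.length = k + 1 ∧ v.Pairwise (· ≥ ·) := by
  simp only [IsSAS, mem_Bword hk]
  have long : ∀ u : List ℕ, (∀ a ∈ u, 1 ≤ a ∧ a ≤ σ) → ¬ u.Sublist (Bword σ k) →
      k + 1 ≤ u.length := by
    intro u hu hn
    by_contra h
    exact hn (sublist_Bword_of_length_le hu (by omega))
  constructor
  · rintro ⟨h, hn, hmin⟩
    have hle := hmin (List.replicate (k + 1) 1)
      (by intro a ha; rw [List.eq_of_mem_replicate ha]; omega)
      (not_sublist_Bword (List.pairwise_replicate.2 (Or.inr le_rfl)) (by simp))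
    rw [List.length_replicate] at hle
    have hl := le_antisymm hle (long v h hn)
    exact ⟨h, hl, pairwise_ge_of_not_sublist h hl hn⟩
  · rintro ⟨h, hl, hp⟩
    exact ⟨h, not_sublist_Bword hp (by omega), fun u hu hn => hl ▸ long u hu hn⟩

theorem ncard_pairwise_ge (σ n : ℕ) :
    Set.ncard {v : List ℕ | (∀ a ∈ v, 1 ≤ a ∧ a ≤ σ) ∧ v.length = n ∧ v.Pairwise (· ≥ ·)}
      = σ.multichoose n := by
  -- A multiset on `σ` letters is sent to its letters listed in non-increasing order.
  let g : Fin σ → ℕ := fun i => i + 1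
  have hg : Function.Injective g := fun i j h => by
    simp only [g] at h
    exact Fin.ext (by omega)
  let f : Sym (Fin σ) n → List ℕ := fun s => ((s : Multiset (Fin σ)).map g).sort (· ≥ ·)
  have hf : Function.Injective f := fun s t h => by
    have h' := congrArg (fun l : List ℕ => (l : Multiset ℕ)) h
    simp only [f, Multiset.sort_eq] at h'
    exact Sym.coe_injective (Multiset.map_injective hg h')
  have hr : {v : List ℕ | (∀ a ∈ v, 1 ≤ a ∧ a ≤ σ) ∧ v.length = n ∧ v.Pairwise (· ≥ ·)}
      = Set.range f := by
    ext v
    constructor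
    · rintro ⟨hv, hl, hp⟩
      have : ∃ l : List (Fin σ), l.map g = v := by
        rw [← Set.mem_range, Set.range_list_map]
        intro a ha
        have := hv a ha
        exact ⟨⟨a - 1, by omega⟩, by simp only [g]; omega⟩
      obtain ⟨l, rfl⟩ := this
      refine ⟨⟨(l : Multiset (Fin σ)), by simpa using hl⟩, ?_⟩
      refine List.Perm.eq_of_pairwise' (r := (· ≥ ·)) (Multiset.pairwise_sort _ _) hp ?_
      rw [← Multiset.coe_eq_coe, Multiset.sort_eq]
      rfl
    · rintro ⟨s, rfl⟩
      refine ⟨fun a ha => ?_, by simp [f], Multiset.pairwise_sort _ _⟩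
      simp only [f, Multiset.mem_sort, Multiset.mem_map] at ha
      obtain ⟨i, -, rfl⟩ := ha
      simp only [g]
      omega
  rw [hr, ← Nat.card_coe_set_eq, Nat.card_range_of_injective hf, Nat.card_eq_fintype_card,
    Sym.card_sym_eq_multichoose, Fintype.card_fin]

theorem sum_choose_mul_choose (σ k : ℕ) :
    ∑ t ∈ Finset.Icc 1 σ, σ.choose t * k.choose (t - 1) = (σ + k).choose (k + 1) := by
  rw [Nat.add_choose_eq, Finset.Nat.sum_antidiagonal_eq_sum_range_succ_mk]
  -- Both sums agree on `1 ≤ t ≤ min σ (k + 1)`, and all remaining terms vanish.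
  trans ∑ t ∈ Finset.Icc 1 (min σ (k + 1)), σ.choose t * k.choose (t - 1)
  · symm
    apply Finset.sum_subset
    · intro t ht
      simp only [Finset.mem_Icc] at ht ⊢
      omega
    · intro t ht ht'
      simp only [Finset.mem_Icc] at ht ht'
      rw [Nat.choose_eq_zero_of_lt (n := k) (by omega), mul_zero]
  · trans ∑ t ∈ Finset.Icc 1 (min σ (k + 1)), σ.choose t * k.choose (k + 1 - t)
    · apply Finset.sum_congr rfl
      intro t ht
      simp only [Finset.mem_Icc] at ht
      rw [← Nat.choose_symm (n := k) (k := t - 1) (by omega),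
        show k - (t - 1) = k + 1 - t by omega]
    · apply Finset.sum_subset
      · intro t ht
        simp only [Finset.mem_Icc, Finset.mem_range] at ht ⊢
        omega
      · intro t ht ht'
        simp only [Finset.mem_Icc, Finset.mem_range] at ht ht'
        rcases Nat.eq_zero_or_pos t with rfl | h0
        · rw [Nat.choose_eq_zero_of_lt (n := k) (by omega), mul_zero]
        · rw [Nat.choose_eq_zero_of_lt (n := σ) (by omega), zero_mul]

/-- The number of shortest absent subsequences of `B_k = (1·2···σ)^k` equals
`Σ_{t=1}^{σ} C(σ,t)·C(k,t−1)`. -/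
theorem card_sas_Bword (σ k : ℕ) (hσ : 2 ≤ σ) (hk : 1 ≤ k) :
    Set.ncard {v : List ℕ | IsSAS (Bword σ k) v}
      = ∑ t ∈ Finset.Icc 1 σ, Nat.choose σ t * Nat.choose k (t - 1) := by
  simp only [isSAS_Bword_iff (by omega : 1 ≤ σ) hk]
  rw [ncard_pairwise_ge, sum_choose_mul_choose, Nat.multichoose_eq,
    show σ + (k + 1) - 1 = σ + k by omega]
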